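/- Let n ≥ 2 and let μ = f·Lⁿ ∈ 𝒲(ℝⁿ) be a PS measure. Then for any v, η ∈ S^{n−1} and any Lebesgue-measurable set E ⊆ ℝⁿ, Per_μ(H_μ(E, η)) = Per_μ(H_μ(E, v)), and the half-spaces H_μ(E, η), η ∈ S^{n−1}, are minimal for μ-perimeter among all measurable sets F with μ(F) = μ(E), i.e. Per_μ(H_μ(E, η)) ≤ Per_μ(F) for all such F. In particular, for any u ∈ S^{n−1} and c ∈ ℝ, the half-space H(u, c) satisfies Per_μ(H(u, c)) ≤ Per_μ(F) for all measurable F with μ(F) = μ(H(u, c)). -/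

import Mathlib

/-!
Half-spaces minimize the perimeter of a PS measure because every competitor can be pushed
towards the half-space by symmetrizations without increasing its perimeter.

Fix a half-space `H` with inner normal `η` and a set `F` with `μ(F) = μ(H)` and finite perimeter
`P`. The class of measurable sets of mass `μ(H)` and perimeter at most `P` contains `F` (up to a
null set) and is stable under all symmetrizations. Let `q` be the infimum of `μ(E \ H)` over this
class. If `w · η > 0`, symmetrizing `E` in the direction `w / |w|` moves mass of `E \ H` into
`H \ E`: it decreases `μ(E \ H)` by at least `∫ min (f 1_{E \ H} (x)) (f 1_{H \ E} (x + w)) dx`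
(`symm_gain`). For a nearly optimal `E` this integral is therefore small for all such `w`
simultaneously. Integrating over `w` in a large ball, after truncating `f` to a bounded set where
it is bounded, bounds `μ(E \ H) μ(H \ E)` up to small errors. Both factors are at least `q`, so
`q = 0` (`exists_close`).

Hence sets of perimeter at most `P` converge to `H` in `μ`-measure. The perimeter is lower
semicontinuous for this convergence (`perim_le_of_tendsto`): the finite measure with density
`|f div φ + φ · ∇f|` is absolutely continuous with respect to `μ`, since `∇f = 0` almost everywhere
on `{f = 0}` (`weakGrad_ae_zero`). This gives `Per(H) ≤ P` (`halfSpace_minimal`). The half-spaces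
`H_μ(E, η)` all have mass `μ(E)` (`halfSpaceOf_eq`), so minimality also gives the equality of
their perimeters.
-/


open MeasureTheory Set Filter
open scoped ENNReal RealInnerProductSpace Topology

noncomputable section

/-- Euclidean space ℝⁿ. -/
abbrev En (n : ℕ) := EuclideanSpace ℝ (Fin n)

/-- Divergence of a vector field on ℝⁿ. -/
noncomputable def dvg {n : ℕ} (φ : En n → En n) (x : En n) : ℝ :=
  ∑ i : Fin n, fderiv ℝ φ x (EuclideanSpace.single i 1) i

/-- `f'` is the (weak) gradient of `f`, and both are locally integrable;
this encodes `f ∈ W^{1,1}_loc(ℝⁿ)` with weak gradient `∇f = f'`. -/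
def HasWeakGrad {n : ℕ} (f : En n → ℝ) (f' : En n → En n) : Prop :=
  LocallyIntegrable f volume ∧ LocallyIntegrable f' volume ∧
    ∀ φ : En n → En n, ContDiff ℝ 1 φ → HasCompactSupport φ →
      (∫ x, f x * dvg φ x) = - ∫ x, ⟪φ x, f' x⟫

/-- Membership of `μ = f·Lⁿ` in the class `𝒲(ℝⁿ)`: the density `f` is non-negative,
integrable and lies in `W^{1,1}_loc(ℝⁿ)` with weak gradient `f'`. -/
def MemW {n : ℕ} (f : En n → ℝ) (f' : En n → En n) : Prop :=
  (∀ x, 0 ≤ f x) ∧ Integrable f volume ∧ HasWeakGrad f f'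

/-- Admissible test vector fields: `C¹`, compactly supported in `U`, sup-norm at most 1. -/
def IsTestField {n : ℕ} (U : Set (En n)) (φ : En n → En n) : Prop :=
  ContDiff ℝ 1 φ ∧ HasCompactSupport φ ∧ tsupport φ ⊆ U ∧ ∀ x, ‖φ x‖ ≤ 1

/-- The weighted variation `‖g‖_{BV_μ(U)}` (valued in `ℝ≥0∞`;
membership in `BV_μ(U)` means that this quantity is finite). -/
noncomputable def bvVar {n : ℕ} (f : En n → ℝ) (f' : En n → En n) (U : Set (En n))
    (g : En n → ℝ) : ℝ≥0∞ :=
  ⨆ (φ : En n → En n) (_ : IsTestField U φ),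
    ENNReal.ofReal (∫ x in U, g x * (f x * dvg φ x + ⟪φ x, f' x⟫))

/-- The weighted perimeter `Per_μ(E; U)`. -/
noncomputable def perim {n : ℕ} (f : En n → ℝ) (f' : En n → En n) (U : Set (En n))
    (E : Set (En n)) : ℝ≥0∞ :=
  bvVar f f' U (E.indicator fun _ => (1 : ℝ))

/-- The measure `μ = f·Lⁿ`. -/
noncomputable def muM {n : ℕ} (f : En n → ℝ) : Measure (En n) :=
  volume.withDensity fun x => ENNReal.ofReal (f x)

/-- One-dimensional generalized Ehrhard symmetrization of `A ⊆ ℝ` in direction `v ∈ {−1,+1}`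
with respect to a measure `ν` on `ℝ`: the largest half-line `{t : v·t ≥ c}` of `ν`-measure
`ν A` (with the conventions `∅`, `ℝ` when `c = ±∞`). -/
def ehrhard1D (ν : Measure ℝ) (v : ℝ) (A : Set ℝ) : Set ℝ :=
  {t | ∀ b : ℝ, (∀ c : ℝ, ν {y | c ≤ v * y} ≤ ν A → b ≤ c) → b ≤ v * t}

/-- The weighted measure `f·H¹` on the fiber `{x + t·v : t ∈ ℝ}`, identified with `ℝ`. -/
noncomputable def fiberMeasure {n : ℕ} (f : En n → ℝ) (x v : En n) : Measure ℝ :=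
  (volume : Measure ℝ).withDensity fun t => ENNReal.ofReal (f (x + t • v))

/-- Generalized `v`-Ehrhard symmetrization of `E ⊆ ℝⁿ` with respect to `μ = f·Lⁿ`:
on each fiber over `v^⊥` one replaces `E` by the largest half-line in direction `v`
of the same weighted measure. -/
def ehrhardSymm {n : ℕ} (f : En n → ℝ) (v : En n) (E : Set (En n)) : Set (En n) :=
  {z | ⟪z, v⟫ ∈
      ehrhard1D (fiberMeasure f (z - ⟪z, v⟫ • v) v) 1
        {t | (z - ⟪z, v⟫ • v) + t • v ∈ E}}

/-- `μ = f·Lⁿ` is a perimeter symmetrization (PS) measure: generalized Ehrhard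
symmetrization does not increase the weighted perimeter of sets of finite `μ`-perimeter. -/
def IsPSMeasure {n : ℕ} (f : En n → ℝ) (f' : En n → En n) : Prop :=
  ∀ v : En n, ‖v‖ = 1 → ∀ E : Set (En n), NullMeasurableSet E volume →
    perim f f' univ E < ⊤ →
      perim f f' univ (ehrhardSymm f v E) ≤ perim f f' univ E

/-- The half-space `H(v, r) = {x : x·v ≥ r}`. -/
def halfSpace {n : ℕ} (v : En n) (r : ℝ) : Set (En n) := {x | r ≤ ⟪x, v⟫}

/-- `H_μ(E, v)`: the largest half-space in direction `v` with `μ`-measure `μ(E)`. -/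
def halfSpaceOf {n : ℕ} (f : En n → ℝ) (E : Set (En n)) (v : En n) : Set (En n) :=
  {x | ∀ b : ℝ, (∀ c : ℝ, muM f (halfSpace v c) ≤ muM f E → b ≤ c) → b ≤ ⟪x, v⟫}

/-- `g'` is the weak derivative of `g : ℝ → ℝ` (so `g ∈ W^{1,1}_loc(ℝ)`). -/
def HasWeakDeriv (g g' : ℝ → ℝ) : Prop :=
  LocallyIntegrable g volume ∧ LocallyIntegrable g' volume ∧
    ∀ φ : ℝ → ℝ, ContDiff ℝ 1 φ → HasCompactSupport φ →
      (∫ t, g t * deriv φ t) = - ∫ t, φ t * g' t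


/-! ### One-dimensional rearrangement -/

lemma isUpperSet_level (ν : Measure ℝ) (m : ℝ≥0∞) : IsUpperSet {t | ν (Ici t) ≤ m} :=
  fun _ _ hab ha => (measure_mono (Ici_subset_Ici.2 hab)).trans ha

/-- For an atomless finite measure on the line, the half-line of mass at most `m` has mass
exactly `m`. Both inequalities follow from inner regularity: a compact subset of a half-line has
a least (or greatest) element. -/
lemma measure_level (ν : Measure ℝ) [IsFiniteMeasure ν] [NullSingletonClass ν] {m : ℝ≥0∞}
    (hm : m ≤ ν univ) : ν {t | ν (Ici t) ≤ m} = m := by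
  set S := {t | ν (Ici t) ≤ m} with hS
  have hup : IsUpperSet S := isUpperSet_level ν m
  have hmeas : MeasurableSet S := hup.ordConnected.measurableSet
  apply le_antisymm
  · rw [hmeas.measure_eq_iSup_isCompact_of_ne_top (measure_ne_top _ _)]
    refine iSup₂_le fun K hKS => iSup_le fun hK => ?_
    rcases K.eq_empty_or_nonempty with rfl | hne
    · simp
    obtain ⟨t, htK, ht⟩ := hK.exists_isLeast hne
    exact (measure_mono fun y hy => ht hy).trans (hKS htK)
  · have h : ν Sᶜ ≤ ν univ - m := by
      rw [hmeas.compl.measure_eq_iSup_isCompact_of_ne_top (measure_ne_top _ _)]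
      refine iSup₂_le fun K hKS => iSup_le fun hK => ?_
      rcases K.eq_empty_or_nonempty with rfl | hne
      · simp
      obtain ⟨t, htK, ht⟩ := hK.exists_isGreatest hne
      have h1 : ν K ≤ ν (Iic t) := measure_mono fun y hy => ht hy
      have h2 : ν (Iic t) = ν univ - ν (Ioi t) := by
        rw [← compl_Ioi, measure_compl measurableSet_Ioi (measure_ne_top _ _)]
      have h3 : m ≤ ν (Ioi t) := by
        rw [measure_congr Ioi_ae_eq_Ici]
        have hlt : ¬ ν (Ici t) ≤ m := hKS htK
        exact (not_le.1 hlt).le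
      exact h1.trans (h2.le.trans (tsub_le_tsub_left h3 _))
    rw [measure_compl hmeas (measure_ne_top _ _)] at h
    exact (ENNReal.sub_le_sub_iff_left hm (measure_ne_top _ _)).1 h

/-- The half-line above all lower bounds of the admissible thresholds, in closed form. -/
lemma lower_bound_iff_level (ν : Measure ℝ) [NullSingletonClass ν] (m : ℝ≥0∞) (t : ℝ) :
    (∀ b : ℝ, (∀ c : ℝ, ν (Ici c) ≤ m → b ≤ c) → b ≤ t) ↔ ν (Ici t) ≤ m := by
  constructor
  · intro h
    obtain ⟨u, hu, hlt, hlim⟩ := exists_seq_strictAnti_tendsto t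
    rw [← measure_congr Ioi_ae_eq_Ici, ← iUnion_Ici_eq_Ioi_of_lt_of_tendsto hlt hlim,
      Monotone.measure_iUnion fun i j hij => Ici_subset_Ici.2 (hu.antitone hij)]
    refine iSup_le fun i => ?_
    by_contra hcon
    refine absurd (h (u i) fun c' hc' => ?_) (not_le.2 (hlt i))
    by_contra hcu
    exact hcon ((measure_mono (Ici_subset_Ici.2 (not_le.1 hcu).le)).trans hc')
  · intro h b hb
    exact hb t h

/-- Replacing `A` by the half-line of the same mass moves at least the smaller of the
masses of `A \ T` and `T \ A` into the half-line `T`. -/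
lemma level_gain (ν : Measure ℝ) [IsFiniteMeasure ν] [NullSingletonClass ν] {A T : Set ℝ}
    (hA : MeasurableSet A) (hT : IsUpperSet T) :
    ν ({t | ν (Ici t) ≤ ν A} \ T) + min (ν (A \ T)) (ν (T \ A)) ≤ ν (A \ T) := by
  set S := {t | ν (Ici t) ≤ ν A} with hS
  have hup : IsUpperSet S := isUpperSet_level ν _
  have hSm : ν S = ν A := measure_level ν (measure_mono (subset_univ _))
  have hTm : MeasurableSet T := hT.ordConnected.measurableSet
  rcases hup.total hT with h | h
  · rw [sdiff_eq_empty.2 h, measure_empty, zero_add]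
    exact min_le_left _ _
  · refine (add_le_add_right (min_le_right _ _) _).trans ?_
    have e1 : ν (S \ T) + ν T = ν A := by
      rw [← hSm, ← measure_sdiff_add_inter S hTm, inter_eq_self_of_subset_right h]
    have e2 := measure_sdiff_add_inter (μ := ν) A hTm
    have e3 := measure_sdiff_add_inter (μ := ν) T hA
    rw [inter_comm] at e3
    refine (ENNReal.add_le_add_iff_right (measure_ne_top ν (A ∩ T))).1 ?_
    rw [e2, ← e1, add_assoc, e3]

/-! ### Fibers of Lebesgue measure -/

lemma measurable_shear {n : ℕ} (v : En n) : Measurable fun p : En n × ℝ => p.1 + p.2 • v := by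
  fun_prop

/-- Integration over the lines parallel to `v`, each line being counted once on average
because the base points range over a strip of width one. -/
lemma lintegral_fiber {n : ℕ} {v : En n} (hv : ‖v‖ = 1) {h : En n → ℝ≥0∞} (hh : Measurable h) :
    ∫⁻ z, h z = ∫⁻ z in {z | ⟪z, v⟫ ∈ Icc (0 : ℝ) 1}, ∫⁻ s : ℝ, h (z + s • v) := by
  have hstrip : MeasurableSet {z : En n | ⟪z, v⟫ ∈ Icc (0 : ℝ) 1} :=
    measurableSet_Icc.preimage (by fun_prop)
  have hind : Measurable ({z : En n | ⟪z, v⟫ ∈ Icc (0 : ℝ) 1}.indicator fun _ => (1 : ℝ≥0∞)) :=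
    measurable_const.indicator hstrip
  set χ : En n → ℝ≥0∞ := {z : En n | ⟪z, v⟫ ∈ Icc (0 : ℝ) 1}.indicator fun _ => 1 with hχ
  rw [← lintegral_indicator hstrip]
  have e0 : ∀ z, {z : En n | ⟪z, v⟫ ∈ Icc (0 : ℝ) 1}.indicator
      (fun z => ∫⁻ s : ℝ, h (z + s • v)) z = ∫⁻ s : ℝ, χ z * h (z + s • v) := by
    intro z
    by_cases hz : ⟪z, v⟫ ∈ Icc (0 : ℝ) 1
    · simp [hχ, indicator, hz, -mem_Icc]
    · simp [hχ, indicator, hz, -mem_Icc]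
  simp_rw [e0]
  rw [lintegral_lintegral_swap]
  swap
  · exact ((hind.comp measurable_fst).mul (hh.comp (measurable_shear v))).aemeasurable
  have e1 : ∀ s : ℝ, ∫⁻ z, χ z * h (z + s • v) = ∫⁻ z, χ (z - s • v) * h z := by
    intro s
    simpa using lintegral_add_right_eq_self (fun z => χ (z - s • v) * h z) (s • v)
  simp_rw [e1]
  rw [lintegral_lintegral_swap]
  swap
  · refine Measurable.aemeasurable ?_
    refine (hind.comp ?_).mul (hh.comp measurable_snd)
    exact (measurable_snd.sub (measurable_fst.smul_const v))
  congr 1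
  ext z
  have e2 : ∀ s : ℝ, χ (z - s • v) = (Icc (⟪z, v⟫ - 1) ⟪z, v⟫).indicator 1 s := by
    intro s
    have : ⟪z - s • v, v⟫ = ⟪z, v⟫ - s := by
      rw [inner_sub_left, inner_smul_left, real_inner_self_eq_norm_sq, hv]; simp
    simp only [hχ, indicator, mem_ofPred_eq, this, mem_Icc, Pi.one_apply]
    congr 1
    apply propext
    constructor <;> rintro ⟨h1, h2⟩ <;> constructor <;> linarith
  simp_rw [e2]
  rw [lintegral_mul_const _ (measurable_one.indicator measurableSet_Icc),
    lintegral_indicator_one measurableSet_Icc]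
  simp

/-- A null set meets almost every line parallel to `v` in a null set. -/
lemma ae_fiber {n : ℕ} (v : En n) {p : En n → Prop} (hp : ∀ᵐ z, p z) :
    ∀ᵐ z : En n, ∀ᵐ s : ℝ, p (z + s • v) := by
  have key : ∀ᵐ q : En n × ℝ, p (q.1 + q.2 • v) := by
    have hq : MeasurePreserving (fun q : ℝ × En n => (q.1, q.2 + q.1 • v))
        (volume.prod volume) (volume.prod volume) := by
      refine MeasurePreserving.skew_product (MeasurePreserving.id _)
        (g := fun s z => z + s • v) (by fun_prop) ?_
      exact Eventually.of_forall fun s => (measurePreserving_add_right volume (s • v)).map_eq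
    have h2 : ∀ᵐ q : ℝ × En n ∂(volume.prod volume), p q.2 :=
      Measure.quasiMeasurePreserving_snd.ae hp
    have h3 := hq.quasiMeasurePreserving.ae h2
    exact (Measure.measurePreserving_swap (μ := (volume : Measure (En n)))
      (ν := (volume : Measure ℝ))).quasiMeasurePreserving.ae h3
  exact Measure.ae_ae_of_ae_prod key

/-! ### Symmetrization with respect to a measurable weight -/

/-- The weight `g` restricted to the line through `z` in direction `v`, parametrized by the
displacement from `z`. -/
def fibM {n : ℕ} (g : En n → ℝ≥0∞) (v z : En n) : Measure ℝ :=
  (volume : Measure ℝ).withDensity fun s => g (z + s • v)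

/-- Symmetrization in direction `v` for a weight `g`: a point is kept when the part of its line
lying ahead of it weighs at most as much as the part of the line inside `E`. -/
def wSymm {n : ℕ} (g : En n → ℝ≥0∞) (v : En n) (E : Set (En n)) : Set (En n) :=
  {z | fibM g v z (Ici 0) ≤ fibM g v z {s | z + s • v ∈ E}}

instance {n : ℕ} (g : En n → ℝ≥0∞) (v z : En n) : NullSingletonClass (fibM g v z) := by
  unfold fibM; infer_instance

lemma fibM_apply {n : ℕ} (g : En n → ℝ≥0∞) (v z : En n) {B : Set (En n)} (hB : MeasurableSet B) :
    fibM g v z {s | z + s • v ∈ B} = ∫⁻ s : ℝ, B.indicator g (z + s • v) := by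
  have hm : MeasurableSet {s : ℝ | z + s • v ∈ B} := hB.preimage (by fun_prop)
  rw [fibM, withDensity_apply _ hm, ← lintegral_indicator hm]
  rfl

lemma fibM_shift {n : ℕ} (g : En n → ℝ≥0∞) (v z : En n) (t : ℝ) {B : Set ℝ}
    (hB : MeasurableSet B) : fibM g v (z + t • v) {s | t + s ∈ B} = fibM g v z B := by
  have hm : MeasurableSet {s : ℝ | t + s ∈ B} := hB.preimage (by fun_prop)
  rw [fibM, fibM, withDensity_apply _ hm, withDensity_apply _ hB, ← lintegral_indicator hm,
    ← lintegral_indicator hB,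
    ← lintegral_add_left_eq_self (B.indicator fun s => g (z + s • v)) t]
  congr 1
  ext s
  simp only [indicator, mem_ofPred_eq, add_smul, add_assoc]

lemma measurableSet_symm {n : ℕ} {g : En n → ℝ≥0∞} (hg : Measurable g) (v : En n)
    {E : Set (En n)} (hE : MeasurableSet E) : MeasurableSet (wSymm g v E) := by
  refine measurableSet_le ?_ ?_
  · have : ∀ z, fibM g v z (Ici 0) = ∫⁻ s : ℝ in Ici 0, g (z + s • v) := fun z => by
      rw [fibM, withDensity_apply _ measurableSet_Ici]
    simp_rw [this]
    exact (hg.comp (measurable_shear v)).lintegral_prod_right'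
  · simp_rw [fibM_apply g v _ hE]
    exact ((hg.indicator hE).comp (measurable_shear v)).lintegral_prod_right'

/-- The trace of the symmetrized set on a line is the half-line of the right mass. -/
lemma symm_fiber {n : ℕ} (g : En n → ℝ≥0∞) (v z : En n) {E : Set (En n)} (hE : MeasurableSet E) :
    {s : ℝ | z + s • v ∈ wSymm g v E} =
      {t | fibM g v z (Ici t) ≤ fibM g v z {s | z + s • v ∈ E}} := by
  ext t
  have h1 := fibM_shift g v z t (measurableSet_Ici (a := t))
  have h2 := fibM_shift g v z t (B := {s : ℝ | z + s • v ∈ E}) (hE.preimage (by fun_prop))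
  simp only [mem_Ici, le_add_iff_nonneg_right, mem_ofPred_eq, add_smul, ← add_assoc] at h1 h2
  simp only [wSymm, mem_ofPred_eq]
  rw [← h1, ← h2]
  rfl

/-- Almost every line (with base point in the unit strip) carries finite weight. -/
lemma ae_finite_fibM {n : ℕ} {g : En n → ℝ≥0∞} (hg : Measurable g) (hfin : ∫⁻ z, g z ≠ ⊤)
    {v : En n} (hv : ‖v‖ = 1) :
    ∀ᵐ z ∂(volume.restrict {z : En n | ⟪z, v⟫ ∈ Icc (0 : ℝ) 1}),
      IsFiniteMeasure (fibM g v z) := by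
  rw [lintegral_fiber hv hg] at hfin
  have := ae_lt_top (hg.comp (measurable_shear v)).lintegral_prod_right' hfin
  filter_upwards [this] with z hz
  refine ⟨?_⟩
  rw [fibM, withDensity_apply _ MeasurableSet.univ, Measure.restrict_univ]
  exact hz

lemma measure_symm {n : ℕ} {g : En n → ℝ≥0∞} (hg : Measurable g) (hfin : ∫⁻ z, g z ≠ ⊤)
    {v : En n} (hv : ‖v‖ = 1) {E : Set (En n)} (hE : MeasurableSet E) :
    volume.withDensity g (wSymm g v E) = volume.withDensity g E := by
  have hS := measurableSet_symm hg v hE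
  rw [withDensity_apply _ hS, withDensity_apply _ hE, ← lintegral_indicator hS,
    ← lintegral_indicator hE, lintegral_fiber hv (hg.indicator hS),
    lintegral_fiber hv (hg.indicator hE)]
  refine lintegral_congr_ae ?_
  filter_upwards [ae_finite_fibM hg hfin hv] with z hz
  rw [← fibM_apply g v z hE, ← fibM_apply g v z hS, symm_fiber g v z hE]
  exact measure_level _ (measure_mono (subset_univ _))

/-- The part of `E \ H` that lands in `H \ E` under translation by `w`, weighted by the smaller
of the two densities. -/
def exchange {n : ℕ} (g : En n → ℝ≥0∞) (E H : Set (En n)) (w x : En n) : ℝ≥0∞ :=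
  min ((E \ H).indicator g x) ((H \ E).indicator g (x + w))

lemma measurable_exchange {n : ℕ} {g : En n → ℝ≥0∞} (hg : Measurable g) {E H : Set (En n)}
    (hE : MeasurableSet E) (hH : MeasurableSet H) :
    Measurable fun p : En n × En n => exchange g E H p.1 p.2 :=
  ((hg.indicator (hE.diff hH)).comp measurable_snd).min
    ((hg.indicator (hH.diff hE)).comp (measurable_snd.add measurable_fst))

/-- Symmetrization in the direction of `w` moves into `H` at least the mass of `E \ H` that
translation by `w` could exchange with `H \ E`. -/
lemma symm_gain {n : ℕ} {g : En n → ℝ≥0∞} (hg : Measurable g) (hfin : ∫⁻ z, g z ≠ ⊤)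
    {v η : En n} (hv : ‖v‖ = 1) (hvη : 0 < ⟪v, η⟫) {E : Set (En n)} (hE : MeasurableSet E)
    {T : Set ℝ} (hT : IsUpperSet T) (ρ : ℝ) :
    volume.withDensity g (wSymm g v E \ {x | ⟪x, η⟫ ∈ T}) +
      ∫⁻ x, exchange g E {x | ⟪x, η⟫ ∈ T} (ρ • v) x ≤
    volume.withDensity g (E \ {x | ⟪x, η⟫ ∈ T}) := by
  have hS := measurableSet_symm hg v hE
  have hH : MeasurableSet {x : En n | ⟪x, η⟫ ∈ T} :=
    hT.ordConnected.measurableSet.preimage (by fun_prop)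
  set H := {x : En n | ⟪x, η⟫ ∈ T} with hHdef
  have hexm : Measurable (exchange g E H (ρ • v)) :=
    (measurable_exchange hg hE hH).comp (measurable_prodMk_left (x := ρ • v))
  rw [withDensity_apply _ (hS.diff hH), withDensity_apply _ (hE.diff hH),
    ← lintegral_indicator (hS.diff hH), ← lintegral_indicator (hE.diff hH),
    lintegral_fiber hv (hg.indicator (hS.diff hH)), lintegral_fiber hv (hg.indicator (hE.diff hH)),
    lintegral_fiber hv hexm, ← lintegral_add_left]
  swap
  · exact ((hg.indicator (hS.diff hH)).comp (measurable_shear v)).lintegral_prod_right'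
  refine lintegral_mono_ae ?_
  filter_upwards [ae_finite_fibM hg hfin hv] with z hz
  have hT' : IsUpperSet {s : ℝ | z + s • v ∈ H} := by
    intro s t hst hs
    simp only [hHdef, mem_ofPred_eq, inner_add_left, inner_smul_left] at hs ⊢
    refine hT ?_ hs
    have : s * ⟪v, η⟫ ≤ t * ⟪v, η⟫ := mul_le_mul_of_nonneg_right hst hvη.le
    simpa using this
  have hA : MeasurableSet {s : ℝ | z + s • v ∈ E} := hE.preimage (by fun_prop)
  have key := level_gain (fibM g v z) hA hT'
  have e1 : {t | fibM g v z (Ici t) ≤ fibM g v z {s | z + s • v ∈ E}} \ {s : ℝ | z + s • v ∈ H}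
      = {s : ℝ | z + s • v ∈ wSymm g v E \ H} := by
    rw [← symm_fiber g v z hE]; rfl
  have e2 : {s : ℝ | z + s • v ∈ E} \ {s : ℝ | z + s • v ∈ H}
      = {s : ℝ | z + s • v ∈ E \ H} := rfl
  have e3 : {s : ℝ | z + s • v ∈ H} \ {s : ℝ | z + s • v ∈ E}
      = {s : ℝ | z + s • v ∈ H \ E} := rfl
  rw [e1, e2, e3, fibM_apply g v z (hS.diff hH), fibM_apply g v z (hE.diff hH),
    fibM_apply g v z (hH.diff hE)] at key
  refine (add_le_add_right (le_min ?_ ?_) _).trans key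
  · exact lintegral_mono fun s => min_le_left _ _
  · rw [← lintegral_add_right_eq_self (fun s : ℝ => (H \ E).indicator g (z + s • v)) ρ]
    refine lintegral_mono fun s => (min_le_right _ _).trans (le_of_eq ?_)
    rw [add_smul, add_assoc]

/-- The symmetrization of the statement agrees almost everywhere with the one defined through
measurable representatives of the density and of the set. -/
lemma ehrhardSymm_ae_eq {n : ℕ} {f : En n → ℝ} {g : En n → ℝ≥0∞}
    (hfg : (fun x => ENNReal.ofReal (f x)) =ᵐ[volume] g) {v : En n}
    {E : Set (En n)} (hE : MeasurableSet E) :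
    ehrhardSymm f v E =ᵐ[volume] wSymm g v E := by
  rw [eventuallyEq_set]
  filter_upwards [ae_fiber v hfg] with z hz
  set a : ℝ := ⟪z, v⟫ with ha
  set z₀ : En n := z - a • v with hz₀
  have hzz : z = z₀ + a • v := by simp [hz₀]
  have hν : fiberMeasure f z₀ v = fibM g v z₀ := by
    refine withDensity_congr_ae ?_
    have h2 := (measurePreserving_add_right (volume : Measure ℝ) (-a)).quasiMeasurePreserving.ae hz
    filter_upwards [h2] with t ht
    have : z + (t + -a) • v = z₀ + t • v := by
      rw [hzz, add_smul, neg_smul]; abel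
    rwa [this] at ht
  have h1 := fibM_shift g v z₀ a (measurableSet_Ici (a := a))
  have h2 := fibM_shift g v z₀ a (B := {s : ℝ | z₀ + s • v ∈ E}) (hE.preimage (by fun_prop))
  simp only [mem_Ici, le_add_iff_nonneg_right, mem_ofPred_eq, add_smul, ← add_assoc] at h1 h2
  rw [← hzz] at h1 h2
  have h3 : z ∈ ehrhardSymm f v E ↔
      fibM g v z₀ (Ici a) ≤ fibM g v z₀ {t | z₀ + t • v ∈ E} := by
    have : NullSingletonClass (fiberMeasure f z₀ v) := by unfold fiberMeasure; infer_instance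
    rw [← hν, ← lower_bound_iff_level]
    simp only [ehrhardSymm, ehrhard1D, mem_ofPred_eq, one_mul]
    rfl
  rw [h3, ← h1, ← h2]
  rfl

/-! ### Approximation of half-spaces -/

lemma exists_truncation {n : ℕ} {g : En n → ℝ≥0∞} (hg : Measurable g) (hfin : ∫⁻ z, g z ≠ ⊤)
    {q : ℝ≥0∞} (hq : q ≠ 0) :
    ∃ R : ℕ, volume.withDensity g (Metric.closedBall 0 R ∩ {x | g x ≤ R})ᶜ < q := by
  have hmeas : ∀ R : ℕ, MeasurableSet (Metric.closedBall (0 : En n) R ∩ {x | g x ≤ R}) :=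
    fun R => measurableSet_closedBall.inter (measurableSet_le hg measurable_const)
  have hanti : Antitone fun R : ℕ => (Metric.closedBall (0 : En n) R ∩ {x | g x ≤ R})ᶜ := by
    intro i j hij
    refine compl_subset_compl.2 (inter_subset_inter ?_ ?_)
    · exact Metric.closedBall_subset_closedBall (by exact_mod_cast hij)
    · intro x (hx : g x ≤ i)
      exact hx.trans (by exact_mod_cast hij)
  have : IsFiniteMeasure (volume.withDensity g) := isFiniteMeasure_withDensity hfin
  have hlim := tendsto_measure_iInter_atTop (μ := volume.withDensity g)
    (fun R : ℕ => (hmeas R).compl.nullMeasurableSet) hanti ⟨0, measure_ne_top _ _⟩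
  have h0 : volume.withDensity g
      (⋂ R : ℕ, (Metric.closedBall (0 : En n) R ∩ {x | g x ≤ R})ᶜ) = 0 := by
    refine withDensity_absolutelyContinuous _ _ ?_
    refine measure_mono_null ?_ (ae_lt_top hg hfin)
    intro x hx
    simp only [mem_iInter, mem_compl_iff, mem_inter_iff, not_and, mem_ofPred_eq] at hx ⊢
    intro hlt
    obtain ⟨R₁, hR₁⟩ := ENNReal.exists_nat_gt hlt.ne
    obtain ⟨R₂, hR₂⟩ := exists_nat_ge ‖x‖
    refine hx (max R₁ R₂) ?_ (hR₁.le.trans ?_)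
    · rw [mem_closedBall_zero_iff]
      exact hR₂.trans (by exact_mod_cast le_max_right _ _)
    · exact_mod_cast le_max_left _ _
  rw [h0] at hlim
  exact (hlim.eventually_lt_const (pos_iff_ne_zero.2 hq)).exists

/-- A class of sets of the same mass as a half-space `H` which is stable under all
symmetrizations contains sets arbitrarily close to `H`. If `q` is the infimum of the mass
outside `H`, a nearly optimal set gains nearly nothing from any symmetrization, hence nearly
nothing of `E \ H` can be exchanged with `H \ E` by any translation; averaging over translations
bounds the product of the two masses, which is at least `q ^ 2 / 4` after truncation. -/
lemma exists_close {n : ℕ} {g : En n → ℝ≥0∞} (hg : Measurable g) (hfin : ∫⁻ z, g z ≠ ⊤)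
    {η : En n} {T : Set ℝ} (hT : IsUpperSet T)
    (𝓒 : Set (Set (En n))) (hne : 𝓒.Nonempty) (hmeas : ∀ E ∈ 𝓒, MeasurableSet E)
    (hmass : ∀ E ∈ 𝓒, volume.withDensity g E = volume.withDensity g {x | ⟪x, η⟫ ∈ T})
    (hsymm : ∀ E ∈ 𝓒, ∀ v : En n, ‖v‖ = 1 → wSymm g v E ∈ 𝓒) {ε : ℝ≥0∞} (hε : ε ≠ 0) :
    ∃ E ∈ 𝓒, volume.withDensity g (E \ {x | ⟪x, η⟫ ∈ T}) < ε := by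
  set μ := volume.withDensity g with hμ
  have : IsFiniteMeasure μ := isFiniteMeasure_withDensity hfin
  have hH : MeasurableSet {x : En n | ⟪x, η⟫ ∈ T} :=
    hT.ordConnected.measurableSet.preimage (by fun_prop)
  set H := {x : En n | ⟪x, η⟫ ∈ T} with hHdef
  by_contra! hcon
  set q : ℝ≥0∞ := ⨅ E ∈ 𝓒, μ (E \ H) with hq
  have hqε : ε ≤ q := le_iInf₂ hcon
  have hq0 : q ≠ 0 := fun h => hε (le_zero_iff.1 (h ▸ hqε))
  have hqtop : q ≠ ⊤ := by
    obtain ⟨E, hE⟩ := hne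
    exact ne_top_of_le_ne_top (measure_ne_top μ (E \ H)) (iInf₂_le E hE)
  have hq2 : q / 2 ≠ 0 := by simp [hq0]
  obtain ⟨R, hR⟩ := exists_truncation hg hfin hq2
  have hGm : MeasurableSet (Metric.closedBall (0 : En n) R ∩ {x | g x ≤ R}) :=
    measurableSet_closedBall.inter (measurableSet_le hg measurable_const)
  set G := Metric.closedBall (0 : En n) R ∩ {x | g x ≤ R} with hG
  -- Any set of mass at least `q` keeps mass `q / 2` inside `G`.
  have htr : ∀ A : Set (En n), q ≤ μ A → q / 2 ≤ μ (A ∩ G) := by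
    intro A hA
    have h1 := measure_inter_add_sdiff (μ := μ) A hGm
    have h2 : μ (A \ G) ≤ q / 2 := (measure_mono fun x hx => hx.2).trans hR.le
    have h3 : q / 2 + q / 2 ≤ μ (A ∩ G) + q / 2 := by
      rw [ENNReal.add_halves]
      exact hA.trans (h1.ge.trans (add_le_add_right h2 _))
    exact (ENNReal.add_le_add_iff_right (ENNReal.div_ne_top hqtop (by simp))).1 h3
  set C : ℝ≥0∞ := volume (Metric.closedBall (0 : En n) (2 * R)) * R with hC
  have hCtop : C ≠ ⊤ :=
    ENNReal.mul_ne_top measure_closedBall_lt_top.ne (ENNReal.natCast_ne_top R)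
  obtain ⟨δ, hδ0, hδ⟩ := ENNReal.exists_nnreal_pos_mul_lt hCtop
    (mul_ne_zero hq2 hq2)
  -- a nearly optimal competitor
  obtain ⟨E, hE𝓒, hEq⟩ : ∃ E ∈ 𝓒, μ (E \ H) < q + δ := by
    have : q < q + δ := ENNReal.lt_add_right hqtop (by simpa using hδ0.ne')
    simpa only [hq, iInf_lt_iff, exists_prop] using this
  have hE := hmeas E hE𝓒
  have hexw : ∀ w : En n, ∫⁻ x, exchange g E H w x ≤ δ := by
    intro w
    by_cases hw : 0 < ⟪w, η⟫
    · have hw0 : w ≠ 0 := by rintro rfl; simp at hw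
      have hn : 0 < ‖w‖ := norm_pos_iff.2 hw0
      have hv : ‖(‖w‖⁻¹ • w)‖ = 1 := by
        rw [norm_smul, norm_inv, norm_norm, inv_mul_cancel₀ hn.ne']
      have hvη : 0 < ⟪‖w‖⁻¹ • w, η⟫ := by
        rw [inner_smul_left]
        exact mul_pos (by simpa using hw0) hw
      have hgain := symm_gain hg hfin hv hvη hE hT ‖w‖
      rw [smul_smul, mul_inv_cancel₀ hn.ne', one_smul] at hgain
      have h1 : q ≤ μ (wSymm g (‖w‖⁻¹ • w) E \ H) := iInf₂_le _ (hsymm E hE𝓒 _ hv)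
      refine (ENNReal.add_le_add_iff_left hqtop).1 ?_
      exact (add_le_add_left h1 _).trans (hgain.trans hEq.le)
    · have : ∀ x, exchange g E H w x = 0 := by
        intro x
        by_contra hx
        have hx' := (pos_iff_ne_zero.2 hx)
        rw [exchange, lt_min_iff] at hx'
        have h1 : x ∈ E \ H := mem_of_indicator_ne_zero hx'.1.ne'
        have h2 : x + w ∈ H \ E := mem_of_indicator_ne_zero hx'.2.ne'
        refine h1.2 ?_
        have h3 : ⟪x + w, η⟫ ∈ T := h2.1
        refine hT ?_ h3
        rw [inner_add_left]
        linarith [not_lt.1 hw]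
      simp [this]
  have hA : q / 2 ≤ μ ((E \ H) ∩ G) := htr _ (iInf₂_le E hE𝓒)
  have hB : q / 2 ≤ μ ((H \ E) ∩ G) := by
    refine htr _ ?_
    have e1 := measure_sdiff_add_inter (μ := μ) E hH
    have e2 := measure_sdiff_add_inter (μ := μ) H hE
    rw [hmass E hE𝓒, ← e2, inter_comm] at e1
    rw [← (ENNReal.add_left_inj (measure_ne_top μ (H ∩ E))).1 e1]
    exact iInf₂_le E hE𝓒
  have hAm := (hE.diff hH).inter hGm
  have hBm := (hH.diff hE).inter hGm
  have hprod : μ ((E \ H) ∩ G) * μ ((H \ E) ∩ G) ≤ δ * C := by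
    rw [hμ, withDensity_apply _ hAm, withDensity_apply _ hBm, ← lintegral_indicator hAm,
      ← lintegral_indicator hBm, ← lintegral_mul_const _ (hg.indicator hAm)]
    have hball : MeasurableSet (Metric.closedBall (0 : En n) (2 * R)) :=
      measurableSet_closedBall
    calc ∫⁻ x, ((E \ H) ∩ G).indicator g x * ∫⁻ y, ((H \ E) ∩ G).indicator g y
        = ∫⁻ x, ∫⁻ w, ((E \ H) ∩ G).indicator g x * ((H \ E) ∩ G).indicator g (x + w) := by
          congr 1; ext x
          have hb : Measurable fun w => ((H \ E) ∩ G).indicator g (x + w) :=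
            (hg.indicator hBm).comp (measurable_const_add x)
          rw [lintegral_const_mul _ hb,
            lintegral_add_left_eq_self (((H \ E) ∩ G).indicator g) x]
      _ ≤ ∫⁻ x, ∫⁻ w, (Metric.closedBall (0 : En n) (2 * R)).indicator
            (fun w => R * exchange g E H w x) w := by
          refine lintegral_mono fun x => lintegral_mono fun w => ?_
          by_cases hx : x ∈ (E \ H) ∩ G
          swap
          · simp [indicator_of_notMem hx]
          by_cases hy : x + w ∈ (H \ E) ∩ G
          swap
          · simp [indicator_of_notMem hy]
          have hxn : ‖x‖ ≤ R := mem_closedBall_zero_iff.1 hx.2.1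
          have hyn : ‖x + w‖ ≤ R := mem_closedBall_zero_iff.1 hy.2.1
          have hw : w ∈ Metric.closedBall (0 : En n) (2 * R) := by
            rw [mem_closedBall_zero_iff]
            have : w = (x + w) - x := by abel
            rw [this]
            exact (norm_sub_le _ _).trans (by linarith)
          rw [indicator_of_mem hx, indicator_of_mem hy, indicator_of_mem hw, exchange,
            indicator_of_mem hx.1, indicator_of_mem hy.1]
          have hgx : g x ≤ R := hx.2.2
          have hgy : g (x + w) ≤ R := hy.2.2
          rcases le_total (g x) (g (x + w)) with h | h
          · rw [min_eq_left h, mul_comm]; gcongr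
          · rw [min_eq_right h]; gcongr
      _ = ∫⁻ w, ∫⁻ x, (Metric.closedBall (0 : En n) (2 * R)).indicator
            (fun w => R * exchange g E H w x) w := by
          refine lintegral_lintegral_swap (Measurable.aemeasurable ?_)
          have hm : Measurable fun p : En n × En n => (R : ℝ≥0∞) * exchange g E H p.2 p.1 :=
            ((measurable_exchange hg hE hH).comp measurable_swap).const_mul _
          exact hm.indicator (hball.preimage measurable_snd)
      _ ≤ ∫⁻ w, (Metric.closedBall (0 : En n) (2 * R)).indicator (fun _ => R * (δ : ℝ≥0∞)) w := by
          refine lintegral_mono fun w => ?_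
          by_cases hw : w ∈ Metric.closedBall (0 : En n) (2 * R)
          · simp only [indicator_of_mem hw]
            rw [lintegral_const_mul' _ _ (ENNReal.natCast_ne_top R)]
            gcongr
            exact hexw w
          · simp [indicator_of_notMem hw]
      _ = δ * C := by
          rw [lintegral_indicator hball, setLIntegral_const, hC]
          ring
  exact absurd ((mul_le_mul' hA hB).trans hprod) (not_le.2 hδ)

/-! ### The gradient vanishes where the density vanishes -/

/-- Integrals of an integrable function over the translates of a set depend continuously on the
translation. -/
lemma continuous_setIntegral_translate {n : ℕ} {w : En n → ℝ} (hw : Integrable w) (e : En n)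
    {A : Set (En n)} (hA : MeasurableSet A) :
    Continuous fun s : ℝ => ∫ x in A, w (x + s • e) := by
  refine continuous_of_uniform_approx_of_continuous fun U hU => ?_
  obtain ⟨ε, hε, hεU⟩ := Metric.mem_uniformity_dist.1 hU
  obtain ⟨k, hkc, hkε, hk, hki⟩ :=
    hw.exists_hasCompactSupport_integral_sub_le (half_pos hε)
  refine ⟨fun s => ∫ x in A, k (x + s • e), ?_, fun s => hεU ?_⟩
  · have hconv : Continuous (convolution (A.indicator fun _ => (1 : ℝ)) (fun y => k (-y))
        (ContinuousLinearMap.mul ℝ ℝ) volume) := by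
      refine HasCompactSupport.continuous_convolution_right _ ?_ ?_ (hk.comp continuous_neg)
      · exact hkc.comp_homeomorph (Homeomorph.neg (En n))
      · exact (locallyIntegrable_const (1 : ℝ)).indicator hA
    have : (fun s : ℝ => ∫ x in A, k (x + s • e)) = fun s : ℝ =>
        convolution (A.indicator fun _ => (1 : ℝ)) (fun y => k (-y))
          (ContinuousLinearMap.mul ℝ ℝ) volume (-(s • e)) := by
      ext s
      rw [convolution_def, ← integral_indicator hA]
      congr 1
      ext x
      by_cases hx : x ∈ A
      · simp [hx]
      · simp [hx]
    rw [this]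
    fun_prop
  · have hws : Integrable fun x => w (x + s • e) := hw.comp_add_right _
    have hks : Integrable fun x => k (x + s • e) := hki.comp_add_right _
    rw [dist_eq_norm, ← integral_sub hws.integrableOn hks.integrableOn]
    calc ‖∫ x in A, (w (x + s • e) - k (x + s • e))‖
        ≤ ∫ x in A, ‖w (x + s • e) - k (x + s • e)‖ := norm_integral_le_integral_norm _
      _ ≤ ∫ x, ‖w (x + s • e) - k (x + s • e)‖ :=
          setIntegral_le_integral (hws.sub hks).norm (Eventually.of_forall fun x => norm_nonneg _)
      _ = ∫ x, ‖w x - k x‖ := integral_add_right_eq_self (fun x => ‖w x - k x‖) (s • e)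
      _ < ε := by linarith

lemma integrable_translate_prod {n : ℕ} {w : En n → ℝ} (hw : Integrable w) (e : En n) (h : ℝ) :
    Integrable (fun p : ℝ × En n => w (p.2 + p.1 • e))
      ((volume.restrict (Ioc 0 h)).prod volume) := by
  have hq : MeasurePreserving (fun q : ℝ × En n => (q.1, q.2 + q.1 • e))
      ((volume.restrict (Ioc 0 h)).prod volume) ((volume.restrict (Ioc 0 h)).prod volume) := by
    refine MeasurePreserving.skew_product (MeasurePreserving.id _)
      (g := fun s z => z + s • e) (by fun_prop) ?_
    exact Eventually.of_forall fun s => (measurePreserving_add_right volume (s • e)).map_eq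
  exact hq.integrable_comp_of_integrable (hw.comp_snd (volume.restrict (Ioc 0 h)))

/-- A weak directional derivative integrates to the increments of the function. -/
lemma increment_eq_integral {n : ℕ} {k w : En n → ℝ} (hk : Integrable k) (hw : Integrable w)
    (e : En n)
    (hweak : ∀ ψ : En n → ℝ, ContDiff ℝ 1 ψ → HasCompactSupport ψ →
      ∫ x, k x * fderiv ℝ ψ x e = - ∫ x, ψ x * w x) {h : ℝ} (hh : 0 ≤ h) :
    ∀ᵐ x, k (x + h • e) - k x = ∫ s in Ioc 0 h, w (x + s • e) := by
  have hkh : Integrable fun x => k (x + h • e) := hk.comp_add_right _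
  have hprodInt := integrable_translate_prod hw e h
  refine ae_eq_of_integral_contDiff_smul_eq (hkh.sub hk).locallyIntegrable
    hprodInt.integral_prod_right.locallyIntegrable fun ψ hψ' hψc => ?_
  have hψ : ContDiff ℝ 1 ψ := hψ'.of_le (by exact_mod_cast le_top)
  obtain ⟨C, hC⟩ := hψc.exists_bound_of_continuous hψ.continuous
  have hψd : Continuous fun x => fderiv ℝ ψ x e :=
    (hψ.continuous_fderiv one_ne_zero).clm_apply continuous_const
  obtain ⟨C', hC'⟩ := (hψc.fderiv_apply ℝ e).exists_bound_of_continuous hψd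
  have hbdd : ∀ {u : En n → ℝ}, Integrable u → ∀ c : En n, Integrable fun x => ψ (x - c) * u x :=
    fun hu c => hu.bdd_mul (hψ.continuous.comp (continuous_sub_right c)).aestronglyMeasurable
      (Eventually.of_forall fun x => hC _)
  have hb0 : ∀ {u : En n → ℝ}, Integrable u → Integrable fun x => ψ x * u x := by
    intro u hu
    simpa using hbdd hu 0
  -- the fundamental theorem of calculus for the translates of the test function
  have hftc : ∀ y : En n, ∫ s in Ioc 0 h, fderiv ℝ ψ (y - s • e) e = ψ y - ψ (y - h • e) := by
    intro y
    have hd : ∀ s ∈ uIcc 0 h, HasDerivAt (fun s : ℝ => -ψ (y - s • e))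
        (fderiv ℝ ψ (y - s • e) e) s := by
      intro s _
      have h1 : HasDerivAt (fun s : ℝ => y - s • e) (-e) s := by
        simpa using ((hasDerivAt_id s).smul_const e).const_sub y
      have h2 := ((hψ.differentiable one_ne_zero (y - s • e)).hasFDerivAt.comp_hasDerivAt s h1).neg
      rw [map_neg, neg_neg] at h2
      exact h2
    have hcont : Continuous fun s : ℝ => fderiv ℝ ψ (y - s • e) e := hψd.comp (by fun_prop)
    rw [← intervalIntegral.integral_of_le hh,
      intervalIntegral.integral_eq_sub_of_hasDerivAt hd (hcont.intervalIntegrable _ _)]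
    simp
    ring
  have hI1 : Integrable (Function.uncurry fun (s : ℝ) (y : En n) =>
      k y * fderiv ℝ ψ (y - s • e) e) ((volume.restrict (Ioc 0 h)).prod volume) := by
    refine (hk.comp_snd (volume.restrict (Ioc 0 h))).mul_bdd (c := C') ?_ ?_
    · have : Continuous fun p : ℝ × En n => fderiv ℝ ψ (p.2 - p.1 • e) e :=
        hψd.comp (by fun_prop)
      exact this.aestronglyMeasurable
    · exact Eventually.of_forall fun p => hC' _
  have hI2 : Integrable (Function.uncurry fun (s : ℝ) (x : En n) =>
      ψ x * w (x + s • e)) ((volume.restrict (Ioc 0 h)).prod volume) := by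
    refine hprodInt.bdd_mul (c := C) ?_ ?_
    · exact (hψ.continuous.comp continuous_snd).aestronglyMeasurable
    · exact Eventually.of_forall fun p => hC _
  simp only [smul_eq_mul]
  calc ∫ x, ψ x * (k (x + h • e) - k x)
      = (∫ x, ψ x * k (x + h • e)) - ∫ x, ψ x * k x := by
        simp_rw [mul_sub]
        exact integral_sub (hb0 hkh) (hb0 hk)
    _ = (∫ y, ψ (y - h • e) * k y) - ∫ x, ψ x * k x := by
        congr 1
        simpa using integral_add_right_eq_self (fun y => ψ (y - h • e) * k y) (h • e)
    _ = - ∫ y, k y * (ψ y - ψ (y - h • e)) := by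
        rw [← integral_sub (hbdd hk _) (hb0 hk), ← integral_neg]
        congr 1; ext y; ring
    _ = - ∫ y, ∫ s in Ioc 0 h, k y * fderiv ℝ ψ (y - s • e) e := by
        congr 2; ext y
        rw [integral_const_mul, hftc]
    _ = - ∫ s in Ioc 0 h, ∫ y, k y * fderiv ℝ ψ (y - s • e) e := by
        rw [integral_integral_swap hI1]
    _ = ∫ s in Ioc 0 h, ∫ x, ψ x * w (x + s • e) := by
        rw [← integral_neg]
        congr 1; ext s
        have hts : ContDiff ℝ 1 fun y => ψ (y - s • e) := hψ.comp (contDiff_id.sub contDiff_const)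
        have htc : HasCompactSupport fun y => ψ (y - s • e) :=
          hψc.comp_homeomorph (Homeomorph.subRight (s • e))
        have h1 := hweak _ hts htc
        simp only [fderiv_comp_sub] at h1
        rw [h1, neg_neg]
        simpa using (integral_add_right_eq_self (fun y => ψ (y - s • e) * w y) (s • e)).symm
    _ = ∫ x, ψ x * ∫ s in Ioc 0 h, w (x + s • e) := by
        rw [integral_integral_swap hI2]
        simp_rw [integral_const_mul]

/-- On a set where a nonnegative function vanishes its increments are nonnegative, hence so is
the average of its weak derivative in any direction. -/
lemma setIntegral_nonneg_of_weak {n : ℕ} {k w : En n → ℝ} (hk : Integrable k) (hw : Integrable w)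
    (hk0 : ∀ x, 0 ≤ k x) (e : En n)
    (hweak : ∀ ψ : En n → ℝ, ContDiff ℝ 1 ψ → HasCompactSupport ψ →
      ∫ x, k x * fderiv ℝ ψ x e = - ∫ x, ψ x * w x)
    {A : Set (En n)} (hA : MeasurableSet A) (hAk : ∀ᵐ x, x ∈ A → k x = 0) :
    0 ≤ ∫ x in A, w x := by
  by_contra! hneg
  have hcont := continuous_setIntegral_translate hw e hA
  set J : ℝ → ℝ := fun s => ∫ x in A, w (x + s • e) with hJ
  have hJ0 : J 0 = ∫ x in A, w x := by simp [hJ]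
  have hev : ∀ᶠ s in 𝓝 (0 : ℝ), J s < J 0 / 2 :=
    hcont.continuousAt.eventually_lt_const (by linarith)
  obtain ⟨r, hr, hball⟩ := Metric.eventually_nhds_iff.1 hev
  set h := r / 2 with hhdef
  have hh : 0 < h := half_pos hr
  have hprodInt := integrable_translate_prod hw e h
  have hAint : Integrable (Function.uncurry fun (s : ℝ) (x : En n) => w (x + s • e))
      ((volume.restrict (Ioc 0 h)).prod (volume.restrict A)) := by
    have hle : (volume.restrict (Ioc 0 h)).prod ((volume : Measure (En n)).restrict A) ≤
        (volume.restrict (Ioc 0 h)).prod volume :=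
      Measure.prod_mono le_rfl Measure.restrict_le_self
    exact hprodInt.mono_measure hle
  have h1 : ∫ s in Ioc 0 h, J s = ∫ x in A, ∫ s in Ioc 0 h, w (x + s • e) :=
    integral_integral_swap hAint
  have h2 : 0 ≤ ∫ x in A, ∫ s in Ioc 0 h, w (x + s • e) := by
    refine integral_nonneg_of_ae ?_
    rw [EventuallyLE, ae_restrict_iff' hA]
    filter_upwards [increment_eq_integral hk hw e hweak hh.le, hAk] with x hx hxA hxm
    rw [← hx, hxA hxm, sub_zero]
    exact hk0 _
  have h3 : ∫ s in Ioc 0 h, J s ≤ ∫ s in Ioc 0 h, J 0 / 2 := by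
    refine setIntegral_mono_on ?_ (integrable_const _) measurableSet_Ioc fun s hs => ?_
    · exact (hcont.integrableOn_Icc (a := 0) (b := h)).mono_set Ioc_subset_Icc_self
    · refine (hball ?_).le
      rw [dist_zero_right, Real.norm_eq_abs, abs_of_pos hs.1]
      exact hs.2.trans_lt (half_lt_self hr)
  rw [setIntegral_const] at h3
  simp only [measureReal_def, Real.volume_Ioc, sub_zero, ENNReal.toReal_ofReal hh.le,
    smul_eq_mul] at h3
  nlinarith

lemma ae_zero_of_weak {n : ℕ} {k w : En n → ℝ} (hk : Integrable k) (hw : Integrable w)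
    (hk0 : ∀ x, 0 ≤ k x) (e : En n)
    (hweak : ∀ ψ : En n → ℝ, ContDiff ℝ 1 ψ → HasCompactSupport ψ →
      ∫ x, k x * fderiv ℝ ψ x e = - ∫ x, ψ x * w x) :
    ∀ᵐ x, k x = 0 → w x = 0 := by
  have hZ : NullMeasurableSet {x | k x = 0} volume :=
    nullMeasurableSet_eq_fun hk.aestronglyMeasurable.aemeasurable aemeasurable_const
  obtain ⟨Z, hZk, hZm, hZae⟩ := hZ.exists_measurable_subset_ae_eq
  have hZ0 : ∀ A ⊆ Z, ∀ᵐ x, x ∈ A → k x = 0 :=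
    fun A hA => Eventually.of_forall fun x hx => hZk (hA hx)
  have hz : w =ᵐ[volume.restrict Z] 0 := by
    refine hw.integrableOn.ae_eq_zero_of_forall_setIntegral_eq_zero fun s hs _ => ?_
    rw [Measure.restrict_restrict hs]
    have hm := hs.inter hZm
    have h1 := setIntegral_nonneg_of_weak hk hw hk0 e hweak hm (hZ0 _ inter_subset_right)
    have h2 := setIntegral_nonneg_of_weak hk hw.neg hk0 (-e) (fun ψ hψ hψc => by
      have := hweak ψ hψ hψc
      simp only [map_neg, mul_neg, Pi.neg_apply, integral_neg]
      rw [this]) hm (hZ0 _ inter_subset_right)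
    simp only [Pi.neg_apply, integral_neg] at h2
    linarith
  rw [EventuallyEq, ae_restrict_iff' hZm] at hz
  filter_upwards [hz, eventuallyEq_set.1 hZae] with x hx hxZ hkx
  exact hx (hxZ.2 hkx)

/-- The weak gradient of a nonnegative Sobolev function vanishes a.e. on its zero set. The local
statement reduces to an integrable one by a smooth cutoff. -/
lemma weakGrad_ae_zero {n : ℕ} {f : En n → ℝ} {f' : En n → En n} (hW : MemW f f') :
    ∀ᵐ x, f x = 0 → f' x = 0 := by
  obtain ⟨hf0, hfi, hfl, hfl', hweak⟩ := hW
  have hcoord : ∀ (R : ℕ) (j : Fin n), ∀ᵐ x, f x = 0 → ‖x‖ ≤ R → f' x j = 0 := by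
    intro R j
    let χ : ContDiffBump (0 : En n) := ⟨R + 1, R + 2, by positivity, by linarith⟩
    set e : En n := EuclideanSpace.single j 1 with he
    have hχ : ContDiff ℝ 1 χ := χ.contDiff (n := 1)
    have hχc : HasCompactSupport χ := χ.hasCompactSupport
    have hχd : Continuous fun x => fderiv ℝ χ x e :=
      (hχ.continuous_fderiv one_ne_zero).clm_apply continuous_const
    obtain ⟨C, hC⟩ := hχc.exists_bound_of_continuous hχ.continuous
    obtain ⟨C', hC'⟩ := (hχc.fderiv_apply ℝ e).exists_bound_of_continuous hχd
    have hu : ∀ ψ : En n → ℝ, Continuous ψ → HasCompactSupport ψ →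
        Integrable fun x => ψ x * f' x j := by
      intro ψ hψ hψc
      exact (EuclideanSpace.proj (𝕜 := ℝ) j).integrable_comp
        (hfl'.integrable_smul_left_of_hasCompactSupport hψ hψc)
    -- the weak partial derivative, obtained by testing with fields parallel to `e`
    have hpart : ∀ ψ : En n → ℝ, ContDiff ℝ 1 ψ → HasCompactSupport ψ →
        ∫ x, f x * fderiv ℝ ψ x e = - ∫ x, ψ x * f' x j := by
      intro ψ hψ hψc
      have h1 := hweak (fun x => ψ x • e) (hψ.smul contDiff_const) hψc.smul_right
      have h2 : ∀ x, dvg (fun x => ψ x • e) x = fderiv ℝ ψ x e := by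
        intro x
        have hd : fderiv ℝ (fun x => ψ x • e) x = (fderiv ℝ ψ x).smulRight e :=
          fderiv_smul_const (hψ.differentiable one_ne_zero x) e
        rw [dvg, hd, Finset.sum_eq_single j]
        · simp [he]
        · intro i _ hij
          simp [he, hij]
        · simp
      have h3 : ∀ x, ⟪ψ x • e, f' x⟫ = ψ x * f' x j := by
        intro x
        rw [inner_smul_left, he, EuclideanSpace.inner_single_left]
        simp
      simpa only [h2, h3] using h1
    have hkI : Integrable fun x => f x * χ x :=
      hfi.mul_bdd hχ.continuous.aestronglyMeasurable (Eventually.of_forall hC)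
    have hfd : Integrable fun x => f x * fderiv ℝ χ x e :=
      hfi.mul_bdd hχd.aestronglyMeasurable (Eventually.of_forall hC')
    have hwI : Integrable fun x => χ x * f' x j + f x * fderiv ℝ χ x e :=
      (hu χ hχ.continuous hχc).add hfd
    have hres := ae_zero_of_weak hkI hwI (fun x => mul_nonneg (hf0 x) χ.nonneg) e ?_
    · filter_upwards [hres] with x hx hfx hxR
      have h1 : χ x = 1 := χ.one_of_mem_closedBall (by
        rw [mem_closedBall_zero_iff]; exact hxR.trans (by linarith))
      simpa [hfx, h1] using hx
    · intro ψ hψ hψc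
      have hψd : Continuous fun x => fderiv ℝ ψ x e :=
        (hψ.continuous_fderiv one_ne_zero).clm_apply continuous_const
      obtain ⟨D, hD⟩ := hψc.exists_bound_of_continuous hψ.continuous
      obtain ⟨D', hD'⟩ := (hψc.fderiv_apply ℝ e).exists_bound_of_continuous hψd
      have h1 := hpart (fun x => χ x * ψ x) (hχ.mul hψ) hψc.mul_left
      have h2 : ∀ x, fderiv ℝ (fun x => χ x * ψ x) x e =
          χ x * fderiv ℝ ψ x e + ψ x * fderiv ℝ χ x e := by
        intro x
        rw [fderiv_fun_mul (hχ.differentiable one_ne_zero x) (hψ.differentiable one_ne_zero x)]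
        simp
      have hi1 : Integrable fun x => f x * χ x * fderiv ℝ ψ x e :=
        hkI.mul_bdd hψd.aestronglyMeasurable (Eventually.of_forall hD')
      have hi2 : Integrable fun x => ψ x * (f x * fderiv ℝ χ x e) :=
        hfd.bdd_mul hψ.continuous.aestronglyMeasurable (Eventually.of_forall hD)
      have hi3 : Integrable fun x => ψ x * (χ x * f' x j) :=
        (hu χ hχ.continuous hχc).bdd_mul hψ.continuous.aestronglyMeasurable
          (Eventually.of_forall hD)
      have e1 : ∫ x, f x * fderiv ℝ (fun x => χ x * ψ x) x e =
          (∫ x, f x * χ x * fderiv ℝ ψ x e) + ∫ x, ψ x * (f x * fderiv ℝ χ x e) := by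
        rw [← integral_add hi1 hi2]
        congr 1; ext x; rw [h2]; ring
      have e2 : ∫ x, ψ x * (χ x * f' x j + f x * fderiv ℝ χ x e) =
          (∫ x, ψ x * (χ x * f' x j)) + ∫ x, ψ x * (f x * fderiv ℝ χ x e) := by
        rw [← integral_add hi3 hi2]
        congr 1; ext x; ring
      have e3 : ∫ x, χ x * ψ x * f' x j = ∫ x, ψ x * (χ x * f' x j) := by
        congr 1; ext x; ring
      rw [e1, e3] at h1
      rw [e2]
      linarith
  have hall : ∀ᵐ x, ∀ (R : ℕ) (j : Fin n), f x = 0 → ‖x‖ ≤ R → f' x j = 0 :=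
    ae_all_iff.2 fun R => ae_all_iff.2 fun j => hcoord R j
  filter_upwards [hall] with x hx hfx
  obtain ⟨R, hR⟩ := exists_nat_ge ‖x‖
  ext j
  simpa using hx R j hfx hR

/-! ### Semicontinuity of the perimeter and conclusion -/

lemma perim_congr {n : ℕ} (f : En n → ℝ) (f' : En n → En n) {E E' : Set (En n)}
    (h : E =ᵐ[volume] E') : perim f f' univ E = perim f f' univ E' := by
  unfold perim bvVar
  congr 1; ext φ; congr 1; ext _; congr 1
  simp only [Measure.restrict_univ]
  refine integral_congr_ae ?_
  filter_upwards [indicator_ae_eq_of_ae_eq_set (f := fun _ => (1 : ℝ)) h] with x hx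
  rw [hx]

/-- Lower semicontinuity of the perimeter under convergence in `μ`-measure. The integrand
`f div φ + φ · ∇f` vanishes a.e. on `{f = 0}`, so its indefinite integral is absolutely
continuous with respect to `μ`. -/
lemma perim_le_of_tendsto {n : ℕ} {f : En n → ℝ} {f' : En n → En n} (hW : MemW f f')
    {H : Set (En n)} (hH : MeasurableSet H) {E : ℕ → Set (En n)} (hE : ∀ k, MeasurableSet (E k))
    (hlim : Tendsto (fun k => muM f ((E k \ H) ∪ (H \ E k))) atTop (𝓝 0)) {P : ℝ≥0∞}
    (hP : ∀ k, perim f f' univ (E k) ≤ P) : perim f f' univ H ≤ P := by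
  have hzero := weakGrad_ae_zero hW
  obtain ⟨hf0, hfi, hfl, hfl', -⟩ := hW
  refine iSup₂_le fun φ hφ => ?_
  set h : En n → ℝ := fun x => f x * dvg φ x + ⟪φ x, f' x⟫ with hh
  have hφd : Continuous (dvg φ) := by
    unfold dvg
    refine continuous_finsetSum _ fun i _ => ?_
    have h1 : Continuous fun x => fderiv ℝ φ x (EuclideanSpace.single i 1) :=
      (hφ.1.continuous_fderiv one_ne_zero).clm_apply continuous_const
    fun_prop
  have hφdc : HasCompactSupport (dvg φ) := by
    refine HasCompactSupport.intro hφ.2.1 fun x hx => ?_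
    have : fderiv ℝ φ x = 0 := by
      by_contra hne
      exact hx (support_fderiv_subset ℝ hne)
    simp [dvg, this]
  obtain ⟨C, hC⟩ := hφdc.exists_bound_of_continuous hφd
  have hh1 : Integrable fun x => f x * dvg φ x :=
    hfi.mul_bdd hφd.aestronglyMeasurable (Eventually.of_forall hC)
  have hh2 : Integrable fun x => ⟪φ x, f' x⟫ := by
    have hK : IntegrableOn f' (tsupport φ) := hfl'.integrableOn_isCompact hφ.2.1
    have hK2 : IntegrableOn (fun x => ⟪φ x, f' x⟫) (tsupport φ) := by
      refine Integrable.mono hK.norm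
        (hφ.1.continuous.aestronglyMeasurable.inner hK.aestronglyMeasurable) ?_
      refine Eventually.of_forall fun x => ?_
      rw [norm_norm]
      refine (norm_inner_le_norm _ _).trans ?_
      exact mul_le_of_le_one_left (norm_nonneg _) (hφ.2.2.2 x)
    refine (integrableOn_iff_integrable_of_support_subset fun x hx => ?_).1 hK2
    refine subset_tsupport φ fun h0 => hx ?_
    simp [h0]
  have hhi : Integrable h := hh1.add hh2
  have hhz : ∀ᵐ x, f x = 0 → h x = 0 := by
    filter_upwards [hzero] with x hx hfx
    simp [hh, hfx, hx hfx]
  have hfm : AEMeasurable (fun x => ENNReal.ofReal (f x)) :=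
    hfi.aestronglyMeasurable.aemeasurable.ennreal_ofReal
  -- The density of `|h| dx` with respect to `μ`.
  have hdens : ∀ D : Set (En n), MeasurableSet D →
      ∫⁻ x in D, ‖h x‖ₑ * (ENNReal.ofReal (f x))⁻¹ ∂(muM f) = ∫⁻ x in D, ‖h x‖ₑ := by
    intro D hD
    rw [muM, setLIntegral_withDensity_eq_setLIntegral_mul_non_measurable₀ _ hfm.restrict _ hD
      (Eventually.of_forall fun x => ENNReal.ofReal_lt_top)]
    refine lintegral_congr_ae (ae_restrict_of_ae ?_)
    filter_upwards [hhz] with x hx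
    simp only [Pi.mul_apply]
    by_cases hfx : f x = 0
    · simp [hx hfx]
    · have hpos : ENNReal.ofReal (f x) ≠ 0 := by
        rw [Ne, ENNReal.ofReal_eq_zero, not_le]
        exact lt_of_le_of_ne (hf0 x) (Ne.symm hfx)
      rw [mul_comm, mul_assoc, ENNReal.inv_mul_cancel hpos ENNReal.ofReal_ne_top, mul_one]
  have htot : ∫⁻ x, ‖h x‖ₑ * (ENNReal.ofReal (f x))⁻¹ ∂(muM f) ≠ ⊤ := by
    have := hdens univ MeasurableSet.univ
    simp only [Measure.restrict_univ] at this
    rw [this]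
    exact hhi.2.ne
  have hsmall := tendsto_setLIntegral_zero htot hlim
  have hDm : ∀ k, MeasurableSet ((E k \ H) ∪ (H \ E k)) :=
    fun k => ((hE k).diff hH).union (hH.diff (hE k))
  have hconv : Tendsto (fun k => ∫ x, (E k).indicator (fun _ => (1 : ℝ)) x * h x) atTop
      (𝓝 (∫ x, H.indicator (fun _ => (1 : ℝ)) x * h x)) := by
    have hind : ∀ A : Set (En n), MeasurableSet A →
        Integrable fun x => A.indicator (fun _ => (1 : ℝ)) x * h x := by
      intro A hA
      refine hhi.bdd_mul (c := 1) (measurable_const.indicator hA).aestronglyMeasurable ?_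
      refine Eventually.of_forall fun x => ?_
      by_cases hx : x ∈ A <;> simp [hx]
    refine tendsto_integral_of_L1 _ (hind H hH).aestronglyMeasurable
      (Eventually.of_forall fun k => hind _ (hE k)) ?_
    refine hsmall.congr fun k => ?_
    rw [hdens _ (hDm k), ← lintegral_indicator (hDm k)]
    congr 1; ext x
    by_cases h1 : x ∈ E k <;> by_cases h2 : x ∈ H <;> simp [indicator, h1, h2]
  have hle : ∀ k, ENNReal.ofReal (∫ x, (E k).indicator (fun _ => (1 : ℝ)) x * h x) ≤ P := by
    intro k
    refine le_trans ?_ (hP k)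
    have := le_iSup₂ (f := fun (ψ : En n → En n) (_ : IsTestField univ ψ) =>
      ENNReal.ofReal (∫ x in univ, (E k).indicator (fun _ => (1 : ℝ)) x *
        (f x * dvg ψ x + ⟪ψ x, f' x⟫))) φ hφ
    simpa only [perim, bvVar, Measure.restrict_univ] using this
  rw [Measure.restrict_univ]
  exact le_of_tendsto' ((ENNReal.continuous_ofReal.tendsto _).comp hconv) hle

/-- Every set `{x : x · η ∈ T}` with `T` a half-line minimizes the perimeter of a PS measure in
its mass class. -/
lemma halfSpace_minimal {n : ℕ} {f : En n → ℝ} {f' : En n → En n} (hW : MemW f f')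
    (hPS : IsPSMeasure f f') (η : En n) {T : Set ℝ} (hT : IsUpperSet T) {F : Set (En n)}
    (hF : NullMeasurableSet F volume) (hFm : muM f F = muM f {x | ⟪x, η⟫ ∈ T}) :
    perim f f' univ {x | ⟪x, η⟫ ∈ T} ≤ perim f f' univ F := by
  by_cases hPtop : perim f f' univ F = ⊤
  · rw [hPtop]; exact le_top
  have hfi := hW.2.1
  have hfm : AEMeasurable (fun x => ENNReal.ofReal (f x)) :=
    hfi.aestronglyMeasurable.aemeasurable.ennreal_ofReal
  obtain ⟨g, hg, hfg⟩ := hfm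
  have hμ : muM f = volume.withDensity g := withDensity_congr_ae hfg
  have hfin : ∫⁻ z, g z ≠ ⊤ := by
    rw [← lintegral_congr_ae hfg]
    exact hfi.lintegral_lt_top.ne
  have : IsFiniteMeasure (muM f) := by rw [hμ]; exact isFiniteMeasure_withDensity hfin
  have hH : MeasurableSet {x : En n | ⟪x, η⟫ ∈ T} :=
    hT.ordConnected.measurableSet.preimage (by fun_prop)
  set H := {x : En n | ⟪x, η⟫ ∈ T} with hHdef
  set 𝓒 : Set (Set (En n)) := {E | MeasurableSet E ∧ muM f E = muM f H ∧
    perim f f' univ E ≤ perim f f' univ F} with h𝓒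
  obtain ⟨F', -, hF'm, hF'⟩ := hF.exists_measurable_subset_ae_eq
  have hne : 𝓒.Nonempty := by
    refine ⟨F', hF'm, ?_, (perim_congr f f' hF').le⟩
    rw [← hFm]
    exact measure_congr ((withDensity_absolutelyContinuous _ _).ae_eq hF')
  have hsymm : ∀ E ∈ 𝓒, ∀ v : En n, ‖v‖ = 1 → wSymm g v E ∈ 𝓒 := by
    rintro E ⟨hE, hEm, hEP⟩ v hv
    refine ⟨measurableSet_symm hg v hE, ?_, ?_⟩
    · rw [← hEm, hμ, measure_symm hg hfin hv hE]
    · rw [← perim_congr f f' (ehrhardSymm_ae_eq hfg hE)]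
      exact (hPS v hv E hE.nullMeasurableSet
        (hEP.trans_lt (lt_top_iff_ne_top.2 hPtop))).trans hEP
  have hclose : ∀ k : ℕ, ∃ E ∈ 𝓒, muM f (E \ H) < ((k : ℝ≥0∞) + 1)⁻¹ := by
    intro k
    rw [hμ]
    refine exists_close hg hfin hT 𝓒 hne (fun E hE => hE.1) (fun E hE => ?_) hsymm (by simp)
    rw [← hμ]; exact hE.2.1
  choose E hE𝓒 hElt using hclose
  refine perim_le_of_tendsto hW hH (fun k => (hE𝓒 k).1) ?_ fun k => (hE𝓒 k).2.2
  have heq : ∀ k, muM f (H \ E k) = muM f (E k \ H) := by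
    intro k
    have e1 := measure_sdiff_add_inter (μ := muM f) (E k) hH
    have e2 := measure_sdiff_add_inter (μ := muM f) H (hE𝓒 k).1
    rw [(hE𝓒 k).2.1, ← e2, inter_comm] at e1
    exact ((ENNReal.add_left_inj (measure_ne_top _ _)).1 e1).symm
  have hinv : Tendsto (fun k : ℕ => ((k : ℝ≥0∞) + 1)⁻¹) atTop (𝓝 0) := by
    have := (tendsto_add_atTop_iff_nat 1).2 ENNReal.tendsto_inv_nat_nhds_zero
    simpa using this
  have hinv2 : Tendsto (fun k : ℕ => ((k : ℝ≥0∞) + 1)⁻¹ + ((k : ℝ≥0∞) + 1)⁻¹) atTop (𝓝 0) := by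
    simpa using hinv.add hinv
  refine tendsto_of_tendsto_of_tendsto_of_le_of_le tendsto_const_nhds hinv2
    (fun k => zero_le) fun k => ?_
  refine (measure_union_le _ _).trans ?_
  rw [heq]
  exact add_le_add (hElt k).le (hElt k).le

lemma volume_hyperplane {n : ℕ} {v : En n} (hv : ‖v‖ = 1) (c : ℝ) :
    volume {x : En n | ⟪x, v⟫ = c} = 0 := by
  have hm : MeasurableSet {x : En n | ⟪x, v⟫ = c} :=
    (measurableSet_singleton c).preimage (f := fun x : En n => ⟪x, v⟫) (by fun_prop)
  rw [← lintegral_indicator_one hm, lintegral_fiber hv (measurable_one.indicator hm)]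
  have : ∀ z : En n, ∫⁻ s : ℝ, {x : En n | ⟪x, v⟫ = c}.indicator 1 (z + s • v) = (0 : ℝ≥0∞) := by
    intro z
    have h1 : ∀ s : ℝ, {x : En n | ⟪x, v⟫ = c}.indicator (1 : En n → ℝ≥0∞) (z + s • v) =
        ({c - ⟪z, v⟫} : Set ℝ).indicator 1 s := by
      intro s
      have h2 : ⟪z + s • v, v⟫ = ⟪z, v⟫ + s := by
        rw [inner_add_left, inner_smul_left, real_inner_self_eq_norm_sq, hv]; simp
      simp only [indicator, mem_ofPred_eq, h2, mem_singleton_iff, Pi.one_apply]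
      congr 1
      apply propext
      constructor <;> intro h <;> linarith
    simp_rw [h1]
    rw [lintegral_indicator_one (measurableSet_singleton _)]
    simp
  simp [this]

/-- `H_μ(E, v)` is a half-space, up to the degenerate cases of the empty set and the whole space,
and it has the mass of `E`. -/
lemma halfSpaceOf_eq {n : ℕ} {f : En n → ℝ} (hfi : Integrable f) (E : Set (En n)) {v : En n}
    (hv : ‖v‖ = 1) : ∃ T : Set ℝ, IsUpperSet T ∧ halfSpaceOf f E v = {x | ⟪x, v⟫ ∈ T} ∧
      muM f {x | ⟪x, v⟫ ∈ T} = muM f E := by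
  have : IsFiniteMeasure (muM f) := isFiniteMeasure_withDensity hfi.lintegral_lt_top.ne
  have hmeas : Measurable fun x : En n => ⟪x, v⟫ := by fun_prop
  set ν : Measure ℝ := (muM f).map fun x => ⟪x, v⟫ with hν
  have hν1 : ∀ B : Set ℝ, MeasurableSet B → ν B = muM f {x | ⟪x, v⟫ ∈ B} :=
    fun B hB => Measure.map_apply hmeas hB
  have : NullSingletonClass ν := ⟨fun c => by
    rw [hν1 _ (measurableSet_singleton c)]
    exact withDensity_absolutelyContinuous _ _ (volume_hyperplane hv c)⟩
  have hup := isUpperSet_level ν (muM f E)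
  refine ⟨{t | ν (Ici t) ≤ muM f E}, hup, ?_, ?_⟩
  · ext x
    simp only [halfSpaceOf, mem_ofPred_eq]
    rw [← lower_bound_iff_level]
    simp only [hν1 _ measurableSet_Ici]
    rfl
  · rw [← hν1 _ hup.ordConnected.measurableSet]
    refine measure_level ν ?_
    rw [hν1 _ MeasurableSet.univ]
    simpa using measure_mono (subset_univ E)

/-- **All half-spaces are minimal.** For a PS measure `μ = f·Lⁿ ∈ 𝒲(ℝⁿ)`, `n ≥ 2`:
the half-spaces `H_μ(E, η)` all have the same `μ`-perimeter, they minimize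
`μ`-perimeter in their mass class, and in particular every half-space `H(u, c)`
minimizes `μ`-perimeter among sets of the same `μ`-measure. -/
theorem all_halfspaces_minimal {n : ℕ} (hn : 2 ≤ n) (f : En n → ℝ) (f' : En n → En n)
    (hW : MemW f f') (hPS : IsPSMeasure f f') :
    (∀ E : Set (En n), NullMeasurableSet E volume → ∀ v η : En n, ‖v‖ = 1 → ‖η‖ = 1 →
      perim f f' univ (halfSpaceOf f E η) = perim f f' univ (halfSpaceOf f E v)) ∧
    (∀ E : Set (En n), NullMeasurableSet E volume → ∀ η : En n, ‖η‖ = 1 →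
      ∀ F : Set (En n), NullMeasurableSet F volume → muM f F = muM f E →
        perim f f' univ (halfSpaceOf f E η) ≤ perim f f' univ F) ∧
    (∀ u : En n, ‖u‖ = 1 → ∀ c : ℝ,
      ∀ F : Set (En n), NullMeasurableSet F volume → muM f F = muM f (halfSpace u c) →
        perim f f' univ (halfSpace u c) ≤ perim f f' univ F) := by
  have key : ∀ E : Set (En n), ∀ η : En n, ‖η‖ = 1 →
      ∀ F : Set (En n), NullMeasurableSet F volume → muM f F = muM f E →
        perim f f' univ (halfSpaceOf f E η) ≤ perim f f' univ F := by
    intro E η hη F hF hFE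
    obtain ⟨T, hT, hHT, hmass⟩ := halfSpaceOf_eq hW.2.1 E hη
    rw [hHT]
    exact halfSpace_minimal hW hPS η hT hF (hFE.trans hmass.symm)
  have hcompare : ∀ E : Set (En n), ∀ v η : En n, ‖v‖ = 1 → ‖η‖ = 1 →
      perim f f' univ (halfSpaceOf f E η) ≤ perim f f' univ (halfSpaceOf f E v) := by
    intro E v η hv hη
    obtain ⟨T, hT, hHT, hmass⟩ := halfSpaceOf_eq hW.2.1 E hv
    have hm : MeasurableSet {x : En n | ⟪x, v⟫ ∈ T} :=
      hT.ordConnected.measurableSet.preimage (by fun_prop)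
    refine key E η hη _ ?_ ?_
    · rw [hHT]; exact hm.nullMeasurableSet
    · rw [hHT, hmass]
  refine ⟨fun E _ v η hv hη => le_antisymm (hcompare E v η hv hη) (hcompare E η v hη hv),
    fun E _ η hη F hF hFE => key E η hη F hF hFE, fun u _ c F hF hFc => ?_⟩
  exact halfSpace_minimal hW hPS u (isUpperSet_Ici c) hF hFc

end
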